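/- For each n, let a = √((3/7)n) and let f : ℝ₊ → ℝ₊ be defined by f(x) = log a for 0 ≤ x ≤ a, f(x) = log x for a ≤ x ≤ 2a, and f(x) = √x − √(2a) + log(2a) for x ≥ 2a. Let X be a random vector in ℝⁿ with density proportional to e^{-(n-1)f(|x|)}. Then P(√((3/7)n) ≤ |X| ≤ 2√((3/7)n)) ≥ 1 − C/n for a universal constant C > 0. -/

import Mathlib

open MeasureTheory Real

/-- The radial profile: `log a` on `[0,a]`, `log x` on `[a,2a]`,
`√x - √(2a) + log(2a)` on `[2a,∞)`. -/
noncomputable def radialF (a x : ℝ) : ℝ :=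
  if x ≤ a then Real.log a
  else if x ≤ 2 * a then Real.log x
  else Real.sqrt x - Real.sqrt (2 * a) + Real.log (2 * a)

open Set Filter Topology in
lemma aux_polar (n : ℕ) (hn : 1 ≤ n) : ∃ K : ENNReal, ∀ f : ℝ → ENNReal, Measurable f →
    ∫⁻ x : Fin n → ℝ, f (Real.sqrt (∑ i, (x i) ^ 2)) =
      K * ∫⁻ y in Ioi (0 : ℝ), ENNReal.ofReal (y ^ (n - 1)) * f y := by
  have : Nonempty (Fin n) := ⟨⟨0, hn⟩⟩
  let E := EuclideanSpace ℝ (Fin n)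
  let μ : Measure E := volume
  refine ⟨μ.toSphere univ, fun f hf => ?_⟩
  have hdim : Module.finrank ℝ E = n := by simp [E]
  calc
    ∫⁻ x : Fin n → ℝ, f (Real.sqrt (∑ i, (x i) ^ 2))
      = ∫⁻ x : E, f ‖x‖ ∂μ := by
        rw [← (PiLp.volume_preserving_toLp (Fin n)).lintegral_comp_emb
          (MeasurableEquiv.toLp 2 _).measurableEmbedding]
        refine lintegral_congr fun x => ?_
        rw [EuclideanSpace.norm_eq]
        simp
    _ = ∫⁻ x : ({(0)}ᶜ : Set E), f (‖x.1‖) ∂(μ.comap (↑)) := by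
      rw [lintegral_subtype_comap (measurableSet_singleton _).compl (fun x : E ↦ f (‖x‖)),
        MeasureTheory.restrict_compl_singleton]
    _ = ∫⁻ x, f x.2 ∂μ.toSphere.prod (.volumeIoiPow (Module.finrank ℝ E - 1)) := by
      simpa using μ.measurePreserving_homeomorphUnitSphereProd.lintegral_comp_emb
        (Homeomorph.measurableEmbedding _) (f ∘ Subtype.val ∘ Prod.snd)
    _ = μ.toSphere univ * ∫⁻ x : Ioi (0 : ℝ), f x ∂.volumeIoiPow (Module.finrank ℝ E - 1) := by
      rw [lintegral_prod _ (by fun_prop)]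
      simp [mul_comm]
    _ = _ := by
      rw [hdim]
      simp only [Measure.volumeIoiPow]
      rw [lintegral_withDensity_eq_lintegral_mul _ (by fun_prop) (by fun_prop)]
      congr 1
      exact lintegral_subtype_comap measurableSet_Ioi
        (fun a : ℝ ↦ ENNReal.ofReal (a ^ (n - 1)) * f a)

open Set Filter Topology in
lemma aux_tail (l b : ℝ) (hl : 0 < l) (hb : 0 < b) :
    ∫⁻ r in Ioi b, ENNReal.ofReal (exp (-l * (√r - √b))) =
      ENNReal.ofReal (2 * √b / l + 2 / l ^ 2) := by
  set g : ℝ → ℝ := fun r => -(2 * √r / l + 2 / l ^ 2) * exp (-l * (√r - √b)) with hg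
  have hd : ∀ x ∈ Ici b, HasDerivAt g (exp (-l * (√x - √b))) x := by
    intro x hx
    have hx0 : 0 < x := lt_of_lt_of_le hb hx
    have hs : 0 < √x := Real.sqrt_pos.2 hx0
    have h1 := Real.hasDerivAt_sqrt hx0.ne'
    have h2 := ((((h1.const_mul 2).div_const l).add_const (2 / l ^ 2)).neg).mul
      (((h1.sub_const (√b)).const_mul (-l)).exp)
    refine h2.congr_deriv ?_
    simp only [Pi.neg_apply]
    field_simp
    ring
  have ht : Tendsto g atTop (𝓝 0) := by
    have h1 : Tendsto (fun s : ℝ => s * exp (-(l * s))) atTop (𝓝 0) := by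
      have h := (Real.tendsto_pow_mul_exp_neg_atTop_nhds_zero 1).comp
        (tendsto_id.const_mul_atTop hl)
      have h' := h.const_mul (l⁻¹)
      simp only [mul_zero] at h'
      refine h'.congr fun s => ?_
      simp
      field_simp
    have h2 : Tendsto (fun s : ℝ => exp (-(l * s))) atTop (𝓝 0) :=
      Real.tendsto_exp_neg_atTop_nhds_zero.comp (tendsto_id.const_mul_atTop hl)
    have h3 := (((h1.const_mul (2 / l)).add (h2.const_mul (2 / l ^ 2))).const_mul
      (-exp (l * √b))).comp Real.tendsto_sqrt_atTop
    simp only [mul_zero, add_zero] at h3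
    refine h3.congr fun s => ?_
    simp only [hg, Function.comp]
    rw [show -l * (√s - √b) = l * √b + -(l * √s) by ring, Real.exp_add]
    ring
  have hi := integrableOn_Ioi_deriv_of_nonneg' hd (fun x _ => (exp_pos _).le) ht
  have hv := integral_Ioi_of_hasDerivAt_of_tendsto' hd hi ht
  rw [← ofReal_integral_eq_lintegral_ofReal hi (ae_of_all _ fun x => (exp_pos _).le), hv]
  congr 1
  simp [hg]

lemma aux_radialF_meas (a : ℝ) : Measurable (radialF a) := by
  unfold radialF
  refine Measurable.ite measurableSet_Iic (by fun_prop) ?_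
  exact Measurable.ite measurableSet_Iic (by fun_prop) (by fun_prop)

lemma aux_w (n : ℕ) (hn : 1 ≤ n) (r t : ℝ) (hr : 0 < r) :
    ENNReal.ofReal (r ^ (n - 1)) * ENNReal.ofReal (exp (-((n : ℝ) - 1) * t)) =
      ENNReal.ofReal (exp (((n : ℝ) - 1) * (log r - t))) := by
  rw [← ENNReal.ofReal_mul (by positivity)]
  congr 1
  have : r ^ (n - 1) = exp (((n : ℝ) - 1) * log r) := by
    rw [show ((n : ℝ) - 1) = ((n - 1 : ℕ) : ℝ) by push_cast [hn]; rfl, Real.exp_nat_mul, Real.exp_log hr]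
  rw [this, ← Real.exp_add]
  ring_nf

open Set in
lemma aux_oneD (n : ℕ) (hn : 150 ≤ n) (a : ℝ) (ha : 8 ≤ a) :
    ∫⁻ r in Ioi (0 : ℝ), ENNReal.ofReal (r ^ (n - 1)) *
        ((Icc a (2 * a))ᶜ.indicator 
          (fun r => ENNReal.ofReal (exp (-((n : ℝ) - 1) * radialF a r))) r) ≤
      ENNReal.ofReal (150 / n) * ∫⁻ r in Ioi (0 : ℝ), ENNReal.ofReal (r ^ (n - 1)) *
        ((Icc a (2 * a)).indicator 
          (fun r => ENNReal.ofReal (exp (-((n : ℝ) - 1) * radialF a r))) r) := by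
  have hn1 : 1 ≤ n := by omega
  have hnR : (150 : ℝ) ≤ n := by exact_mod_cast hn
  have ha0 : 0 < a := by linarith
  set W : ℝ → ENNReal := fun r => ENNReal.ofReal (r ^ (n - 1)) *
    ENNReal.ofReal (exp (-((n : ℝ) - 1) * radialF a r)) with hW
  have key : ∀ S : Set ℝ, MeasurableSet S → ∫⁻ r in Ioi (0 : ℝ), ENNReal.ofReal (r ^ (n - 1)) *
        (S.indicator 
          (fun r => ENNReal.ofReal (exp (-((n : ℝ) - 1) * radialF a r))) r) =
        ∫⁻ r in S ∩ Ioi 0, W r := by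
    intro S hS
    rw [← Measure.restrict_restrict hS, ← lintegral_indicator hS]
    refine lintegral_congr fun r => ?_
    by_cases h : r ∈ S <;> simp [h, hW]
  rw [key _ measurableSet_Icc.compl, key _ measurableSet_Icc]
  have hmid : ∫⁻ r in Icc a (2 * a) ∩ Ioi 0, W r = ENNReal.ofReal a := by
    have : Icc a (2 * a) ∩ Ioi 0 = Icc a (2 * a) := by
      apply inter_eq_left.2
      intro x hx
      exact lt_of_lt_of_le ha0 hx.1
    rw [this, setLIntegral_congr_fun (g := fun _ => 1) measurableSet_Icc]
    · simp
      congr 1; ring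
    · intro r hr
      have hr0 : 0 < r := lt_of_lt_of_le ha0 hr.1
      have : radialF a r = log r := by
        unfold radialF
        split_ifs with h1 h2
        · rw [le_antisymm h1 hr.1]
        · rfl
        · exact absurd hr.2 h2
      simp only [hW]
      rw [aux_w n hn1 r _ hr0, this]
      simp
  have hin : ∫⁻ r in Ioc 0 a, W r = ENNReal.ofReal (a / n) := by
    rw [setLIntegral_congr_fun (g := fun r => ENNReal.ofReal ((r / a) ^ (n - 1))) measurableSet_Ioc]
    · have hint : IntervalIntegrable (fun r : ℝ => (r / a) ^ (n - 1)) volume 0 a :=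
        Continuous.intervalIntegrable (by fun_prop) _ _
      rw [← ofReal_integral_eq_lintegral_ofReal hint.1, ← intervalIntegral.integral_of_le ha0.le]
      · congr 1
        simp only [div_pow]
        rw [intervalIntegral.integral_div, integral_pow]
        obtain ⟨m, rfl⟩ : ∃ m, n = m + 1 := ⟨n - 1, by omega⟩
        simp
        field_simp
        ring
      · filter_upwards [ae_restrict_mem measurableSet_Ioc] with y hy
        exact pow_nonneg (div_nonneg hy.1.le ha0.le) _
    · intro r hr
      have : radialF a r = log a := by
        unfold radialF
        rw [if_pos hr.2]
      simp only [hW]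
      rw [aux_w n hn1 r _ hr.1, this, ← Real.log_div hr.1.ne' ha0.ne']
      congr 1
      rw [show ((n : ℝ) - 1) = ((n - 1 : ℕ) : ℝ) by push_cast [hn1]; rfl, Real.exp_nat_mul, Real.exp_log (div_pos hr.1 ha0)]
  set l : ℝ := ((n : ℝ) - 1) / 2 with hl
  have hl0 : 0 < l := by rw [hl]; linarith
  have hs4 : 4 ≤ √(2 * a) := by
    apply Real.le_sqrt_of_sq_le
    linarith
  have hsq : √(2 * a) ^ 2 = 2 * a := Real.sq_sqrt (by linarith)
  have hout : ∫⁻ r in Ioi (2 * a), W r ≤ ENNReal.ofReal (2 * √(2 * a) / l + 2 / l ^ 2) := by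
    rw [← aux_tail l (2 * a) hl0 (by linarith)]
    refine setLIntegral_mono' measurableSet_Ioi fun r hr => ?_
    have hr' : 2 * a < r := hr
    have hr0 : 0 < r := by linarith
    have : radialF a r = √r - √(2 * a) + log (2 * a) := by
      unfold radialF
      rw [if_neg (by linarith), if_neg (by linarith)]
    simp only [hW]
    rw [aux_w n hn1 r _ hr0, this]
    apply ENNReal.ofReal_le_ofReal
    apply Real.exp_le_exp.2
    set u := √r
    set v := √(2 * a)
    have hu : v ≤ u := Real.sqrt_le_sqrt hr'.le
    have hv0 : 0 < v := by linarith
    have hu0 : 0 < u := by linarith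
    have hru : log r = 2 * log u := by
      rw [← Real.sq_sqrt hr0.le, Real.log_pow]; norm_num
      rfl
    have hrv : log (2 * a) = 2 * log v := by
      rw [← hsq, Real.log_pow]; norm_num
    have h1 : log u - log v ≤ (u - v) / v := by
      rw [← Real.log_div hu0.ne' hv0.ne']
      have := Real.log_le_sub_one_of_pos (div_pos hu0 hv0)
      rw [sub_div, div_self hv0.ne']
      exact this
    have h2 : (u - v) / v ≤ (u - v) / 4 := by
      apply div_le_div_of_nonneg_left (by linarith) (by norm_num) hs4
    rw [hru, hrv, show (n : ℝ) - 1 = 2 * l by rw [hl]; ring]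
    have : 2 * log u - (u - v + 2 * log v) ≤ - (u - v) / 2 := by linarith
    calc 2 * l * (2 * log u - (u - v + 2 * log v)) ≤ 2 * l * (- (u - v) / 2) := by gcongr
      _ = -l * (u - v) := by ring
  have hfin : a / n + (2 * √(2 * a) / l + 2 / l ^ 2) ≤ 150 / n * a := by
    have hva : √(2 * a) ≤ a := by nlinarith
    have hl4 : (n : ℝ) / 4 ≤ l := by rw [hl]; linarith
    have hn0 : (0 : ℝ) < n := by linarith
    have e1 : 2 * √(2 * a) / l ≤ 2 * a / (n / 4) := by gcongr
    have e2 : 2 / l ^ 2 ≤ 2 / (n / 4) := by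
      apply div_le_div_of_nonneg_left (by norm_num) (by linarith)
      nlinarith
    have e3 : 2 / ((n : ℝ) / 4) ≤ a / (n / 4) := by gcongr; linarith
    have : a / n + (2 * a / (n / 4) + a / (n / 4)) ≤ 150 / n * a := by
      field_simp
      linarith
    linarith
  rw [hmid, ← ENNReal.ofReal_mul (by positivity)]
  calc ∫⁻ r in (Icc a (2 * a))ᶜ ∩ Ioi 0, W r ≤ ∫⁻ r in Ioc 0 a ∪ Ioi (2 * a), W r := by
        apply lintegral_mono_set
        rintro x ⟨hx, hx0⟩
        by_cases h : x ≤ a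
        · exact Or.inl ⟨hx0, h⟩
        · right
          by_contra h'
          exact hx ⟨(not_le.1 h).le, not_lt.1 h'⟩
    _ ≤ _ := lintegral_union_le _ _ _
    _ ≤ ENNReal.ofReal (a / n) + ENNReal.ofReal (2 * √(2 * a) / l + 2 / l ^ 2) := by
        rw [hin]; gcongr
    _ = ENNReal.ofReal (a / n + (2 * √(2 * a) / l + 2 / l ^ 2)) := by
        rw [← ENNReal.ofReal_add (by positivity) (by positivity)]
    _ ≤ _ := ENNReal.ofReal_le_ofReal hfin

/-- For `X` distributed with density proportional to `e^{-(n-1) f(|x|)}` with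
`a = √((3/7)n)`, the norm `|X|` concentrates on `[√((3/7)n), 2√((3/7)n)]`. -/
theorem norm_concentration_radial :
    ∃ C : ℝ, 0 < C ∧
      ∀ n : ℕ, 1 ≤ n →
        ∀ (Cn : ℝ) (μ : Measure (Fin n → ℝ)),
          μ = (volume : Measure (Fin n → ℝ)).withDensity
            (fun x => ENNReal.ofReal (Cn * Real.exp (-((n : ℝ) - 1) *
              radialF (Real.sqrt (3 / 7 * n)) (Real.sqrt (∑ i, (x i) ^ 2))))) →
          IsProbabilityMeasure μ →
          1 - C / n ≤
            (μ {x | Real.sqrt (3 / 7 * n) ≤ Real.sqrt (∑ i, (x i) ^ 2) ∧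
                Real.sqrt (∑ i, (x i) ^ 2) ≤ 2 * Real.sqrt (3 / 7 * n)}).toReal := by
  refine ⟨150, by norm_num, fun n hn Cn μ hμ hP => ?_⟩
  have hn0 : (0 : ℝ) < n := by exact_mod_cast hn
  by_cases hbig : 150 ≤ n
  swap
  · have : (n : ℝ) ≤ 150 := by exact_mod_cast (not_le.1 hbig).le
    have : 1 ≤ 150 / (n : ℝ) := by rwa [le_div_iff₀ hn0, one_mul]
    exact le_trans (by linarith) ENNReal.toReal_nonneg
  have hnR : (150 : ℝ) ≤ n := by exact_mod_cast hbig
  set a := √(3 / 7 * (n : ℝ)) with ha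
  have ha8 : 8 ≤ a := Real.le_sqrt_of_sq_le (by linarith)
  obtain ⟨K, hK⟩ := aux_polar n hn
  have hFm := aux_radialF_meas a
  let N : (Fin n → ℝ) → ℝ := fun x => √(∑ i, (x i) ^ 2)
  have hN : Measurable N := by fun_prop
  have hmeas : ∀ S : Set ℝ, MeasurableSet S → μ (N ⁻¹' S) = K * (ENNReal.ofReal Cn *
      ∫⁻ r in Set.Ioi (0 : ℝ), ENNReal.ofReal (r ^ (n - 1)) *
        (S.indicator (fun r => ENNReal.ofReal (exp (-((n : ℝ) - 1) * radialF a r))) r)) := by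
    intro S hS
    have hm : Measurable (S.indicator
        (fun r => ENNReal.ofReal (exp (-((n : ℝ) - 1) * radialF a r)))) :=
      Measurable.indicator (by fun_prop) hS
    rw [hμ, withDensity_apply _ (hN hS), ← lintegral_indicator (hN hS),
      ← lintegral_const_mul _ (by fun_prop)]
    have := hK (fun r => ENNReal.ofReal Cn * (S.indicator
        (fun r => ENNReal.ofReal (exp (-((n : ℝ) - 1) * radialF a r))) r)) (by fun_prop)
    refine Eq.trans ?_ (this.trans ?_)
    · refine lintegral_congr fun x => ?_
      by_cases h : N x ∈ S
      · rw [Set.indicator_of_mem (by exact h), Set.indicator_of_mem (by exact h),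
          ENNReal.ofReal_mul' (exp_pos _).le]
      · rw [Set.indicator_of_notMem (by exact h), Set.indicator_of_notMem (by exact h), mul_zero]
    · congr 1
      refine lintegral_congr fun r => ?_
      rw [mul_left_comm]
  have hA := hmeas (Set.Icc a (2 * a)) measurableSet_Icc
  have hAc := hmeas (Set.Icc a (2 * a))ᶜ measurableSet_Icc.compl
  have hle : μ (N ⁻¹' (Set.Icc a (2 * a))ᶜ) ≤
      ENNReal.ofReal (150 / n) * μ (N ⁻¹' (Set.Icc a (2 * a))) := by
    rw [hA, hAc]
    calc _ ≤ _ := mul_le_mul_right (mul_le_mul_right (aux_oneD n hbig a ha8) _) _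
      _ = _ := by ring
  have hle' : μ (N ⁻¹' (Set.Icc a (2 * a)))ᶜ ≤ ENNReal.ofReal (150 / n) := by
    rw [← Set.preimage_compl]
    refine hle.trans ?_
    calc _ ≤ ENNReal.ofReal (150 / n) * 1 := by gcongr; exact prob_le_one
      _ = _ := mul_one _
  have h1 : μ.real (N ⁻¹' (Set.Icc a (2 * a)))ᶜ ≤ 150 / n :=
    ENNReal.toReal_le_of_le_ofReal (by positivity) hle'
  rw [probReal_compl_eq_one_sub (hN measurableSet_Icc)] at h1
  change 1 - 150 / (n : ℝ) ≤ μ.real (N ⁻¹' (Set.Icc a (2 * a)))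
  linarith
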